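/- Let V be a finite-dimensional faithful representation of a finite group W over a field K, and suppose the invariant ring K[V]^W is a polynomial algebra on homogeneous generators f_1,...,f_k where k = dim V. Then the product of the degrees (deg f_1)···(deg f_k) equals |W|. -/

import Mathlib

open MvPolynomial

/-- The action of a linear automorphism `g` of `V = K^k` on the polynomial
algebra `K[V] = K[x_1, …, x_k]` (the dual/substitution action, sending `x_i`
to `∑_j g_{ji} x_j`). -/
noncomputable def polyAct (K : Type) [Field K] (k : ℕ)
    (g : (Fin k → K) ≃ₗ[K] (Fin k → K)) :
    MvPolynomial (Fin k) K →ₐ[K] MvPolynomial (Fin k) K :=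
  aeval fun i : Fin k =>
    ∑ j : Fin k,
      C (LinearMap.toMatrix (Pi.basisFun K (Fin k)) (Pi.basisFun K (Fin k))
          g.toLinearMap j i) * X j

/-!
Let `S = K[V]`, `R = K[V]^W`, and let `H_S n`, `H_R n` be the dimensions of their parts of degree at
most `n`. By Dedekind's independence of characters there are elements `b_j` of `S`, indexed by `W`,
with `det (w b_j) ≠ 0`. Then `(r_j) ↦ ∑ r_j b_j` embeds `R^W` into `S`, and `s ↦ (∑ w (s b_j))_j`
embeds `S` into `R^W`. Both maps raise degrees by at most a constant `c`, so
`|W| * H_R n ≤ H_S (n + c)` and `H_S n ≤ |W| * H_R (n + c)`. Dividing exponents by `d` with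
remainder compares `H_S` with `(∏ d_i) * H_R` in the same way. Since `H_R` grows polynomially, the
shifts of the argument are negligible, and `|W| = ∏ d_i`.
-/

section Growth

lemma exists_mul_add_one_pow_lt_pow {r : ℝ} (hr : 1 < r) (c k : ℕ) :
    ∃ m : ℕ, ((m * c + 1 : ℕ) : ℝ) ^ k < r ^ m := by
  have hlim := (tendsto_pow_const_div_const_pow_of_one_lt k hr).const_mul (((c + 1 : ℕ) : ℝ) ^ k)
  rw [mul_zero] at hlim
  obtain ⟨m, hlt, hm⟩ :=
    ((hlim.eventually_lt_const zero_lt_one).and (Filter.eventually_ge_atTop 1)).exists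
  rw [← mul_div_assoc, div_lt_one (by positivity), ← mul_pow] at hlt
  refine ⟨m, lt_of_le_of_lt ?_ hlt⟩
  gcongr
  exact_mod_cast (by nlinarith : m * c + 1 ≤ (c + 1) * m)

lemma pow_mul_le_pow_mul_of_mul_le_mul_add {a b c : ℕ} {H : ℕ → ℕ}
    (h : ∀ n, a * H n ≤ b * H (n + c)) (m : ℕ) : a ^ m * H 0 ≤ b ^ m * H (m * c) := by
  induction m with
  | zero => simp
  | succ m ih =>
    calc a ^ (m + 1) * H 0 = a * (a ^ m * H 0) := by ring
      _ ≤ a * (b ^ m * H (m * c)) := Nat.mul_le_mul_left _ ih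
      _ = b ^ m * (a * H (m * c)) := by ring
      _ ≤ b ^ m * (b * H (m * c + c)) := Nat.mul_le_mul_left _ (h _)
      _ = b ^ (m + 1) * H ((m + 1) * c) := by rw [add_one_mul]; ring

lemma le_of_mul_le_mul_add {a b c k : ℕ} {H : ℕ → ℕ} (hpos : 0 < H 0)
    (hpoly : ∀ n, H n ≤ (n + 1) ^ k) (h : ∀ n, a * H n ≤ b * H (n + c)) : a ≤ b := by
  have hpow (m : ℕ) : a ^ m ≤ b ^ m * (m * c + 1) ^ k :=
    calc a ^ m ≤ a ^ m * H 0 := Nat.le_mul_of_pos_right _ hpos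
      _ ≤ b ^ m * H (m * c) := pow_mul_le_pow_mul_of_mul_le_mul_add h m
      _ ≤ b ^ m * (m * c + 1) ^ k := Nat.mul_le_mul_left _ (hpoly _)
  by_contra! hba
  have hb : 0 < b := by
    by_contra! hb
    have := hpow 1
    simp_all
  have hr : (1 : ℝ) < a / b := by
    rw [one_lt_div (by exact_mod_cast hb)]
    exact_mod_cast hba
  obtain ⟨m, hm⟩ := exists_mul_add_one_pow_lt_pow hr c k
  rw [div_pow, lt_div_iff₀ (by positivity), mul_comm] at hm
  exact (hpow m).not_gt (by exact_mod_cast hm)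

end Growth

section WeightCount

variable {σ : Type*}

/-- The number of exponent vectors of `d`-weight at most `n`, i.e. the Hilbert function of the
degree filtration on a polynomial ring whose variables have degrees `d`. It is the junk value `0`
when infinitely many exponents qualify, which for finite `σ` requires some `d i = 0`. -/
noncomputable def weightCount (d : σ → ℕ) (n : ℕ) : ℕ :=
  {a : σ →₀ ℕ | Finsupp.weight d a ≤ n}.ncard

variable {d : σ → ℕ}

lemma weightCount_pos [Finite σ] (hd : ∀ i, d i ≠ 0) (n : ℕ) : 0 < weightCount d n :=
  (Set.ncard_pos (Finsupp.finite_of_nat_weight_le d hd n)).2 ⟨0, by simp⟩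

variable [Fintype σ]

lemma weightCount_le_pow (hd : ∀ i, d i ≠ 0) (n : ℕ) :
    weightCount d n ≤ (n + 1) ^ Fintype.card σ := by
  classical
  let box : Finset (σ → ℕ) := Fintype.piFinset fun _ => Finset.range (n + 1)
  calc weightCount d n ≤ (box : Set (σ → ℕ)).ncard := by
        refine Set.ncard_le_ncard_of_injOn (⇑) (fun a ha => ?_) DFunLike.coe_injective.injOn
        simp only [box, Finset.mem_coe, Fintype.mem_piFinset, Finset.mem_range, Nat.lt_succ_iff]
        exact fun i => (Finsupp.le_weight d (hd i) a).trans ha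
    _ = (n + 1) ^ Fintype.card σ := by
        rw [Set.ncard_coe_finset]
        simp [box]

/-- Coordinatewise division with remainder by `d`. On monomials it expresses that a polynomial ring
is free over the subring generated by the powers `X i ^ d i`, with basis the monomials whose
exponents are remainders. -/
noncomputable def exponentDivMod (d : σ → ℕ) [∀ i, NeZero (d i)] :
    (σ →₀ ℕ) ≃ (σ →₀ ℕ) × ((i : σ) → Fin (d i)) :=
  Finsupp.equivFunOnFinite.trans <| (Equiv.piCongrRight fun i => Nat.divModEquiv (d i)).trans <|
    (Equiv.arrowProdEquivProdArrow σ (fun _ => ℕ) (fun i => Fin (d i))).trans <|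
      Finsupp.equivFunOnFinite.symm.prodCongr (Equiv.refl _)

lemma weight_one_eq_weight_exponentDivMod_add [∀ i, NeZero (d i)] (a : σ →₀ ℕ) :
    Finsupp.weight (1 : σ → ℕ) a = Finsupp.weight d (exponentDivMod d a).1 +
      ∑ i, ((exponentDivMod d a).2 i : ℕ) := by
  simp [exponentDivMod, Finsupp.weight_apply, Finsupp.sum_fintype, ← Finset.sum_add_distrib,
    Equiv.arrowProdEquivProdArrow, Nat.divModEquiv, Nat.div_add_mod']

lemma weightCount_one_le_prod_mul (hd : ∀ i, d i ≠ 0) (n : ℕ) :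
    weightCount (1 : σ → ℕ) n ≤ (∏ i, d i) * weightCount d n := by
  have (i : σ) : NeZero (d i) := ⟨hd i⟩
  calc weightCount (1 : σ → ℕ) n
      ≤ ({q : σ →₀ ℕ | Finsupp.weight d q ≤ n} ×ˢ
          (Set.univ : Set ((i : σ) → Fin (d i)))).ncard := by
        refine Set.ncard_le_ncard_of_injOn (exponentDivMod d) (fun a ha => ⟨?_, trivial⟩)
          (exponentDivMod d).injective.injOn
          ((Finsupp.finite_of_nat_weight_le d hd n).prod Set.finite_univ)
        exact (Nat.le_add_right _ _).trans ((weight_one_eq_weight_exponentDivMod_add a).ge.trans ha)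
    _ = (∏ i, d i) * weightCount d n := by simp [Set.ncard_prod, Nat.card_pi, weightCount, mul_comm]

lemma prod_mul_weightCount_le (hd : ∀ i, d i ≠ 0) (n : ℕ) :
    (∏ i, d i) * weightCount d n ≤ weightCount (1 : σ → ℕ) (n + ∑ i, d i) := by
  have (i : σ) : NeZero (d i) := ⟨hd i⟩
  calc (∏ i, d i) * weightCount d n
      = ({q : σ →₀ ℕ | Finsupp.weight d q ≤ n} ×ˢ
          (Set.univ : Set ((i : σ) → Fin (d i)))).ncard := by
        simp [Set.ncard_prod, Nat.card_pi, weightCount, mul_comm]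
    _ ≤ weightCount (1 : σ → ℕ) (n + ∑ i, d i) := by
        refine Set.ncard_le_ncard_of_injOn (exponentDivMod d).symm (fun x hx => ?_)
          (exponentDivMod d).symm.injective.injOn
          (Finsupp.finite_of_nat_weight_le 1 (fun _ => one_ne_zero) _)
        rw [Set.mem_ofPred_eq, weight_one_eq_weight_exponentDivMod_add (d := d),
          Equiv.apply_symm_apply]
        exact add_le_add hx.1 (Finset.sum_le_sum fun i _ => (x.2 i).isLt.le)

end WeightCount

section Determinant

variable {R α : Type*} [CommRing R] [Nontrivial R]

lemma exists_det_ne_zero_of_linearIndependent_fin {n : ℕ} {v : Fin n → α → R}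
    (hv : LinearIndependent R v) : ∃ b : Fin n → α, (Matrix.of fun i j => v i (b j)).det ≠ 0 := by
  induction n with
  | zero => exact ⟨Fin.elim0, by simp⟩
  | succ n ih =>
    obtain ⟨b, hb⟩ := ih (hv.comp Fin.succ (Fin.succ_injective n))
    by_contra! hdet
    -- Expanding along a first column evaluated at a varying `x` relates the `v i` linearly.
    let minor (i : Fin (n + 1)) : R := (Matrix.of fun r j => v (i.succAbove r) (b j)).det
    have hrel : ∑ i : Fin (n + 1), ((-1) ^ (i : ℕ) * minor i) • v i = 0 := by
      ext x
      have hx := hdet (Fin.cons x b)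
      rw [Matrix.det_succ_column_zero] at hx
      rw [Finset.sum_apply, Pi.zero_apply, ← hx]
      refine Finset.sum_congr rfl fun i _ => ?_
      simp only [Pi.smul_apply, smul_eq_mul, Matrix.of_apply, Fin.cons_zero, minor]
      rw [mul_right_comm]
      rfl
    exact hb (by simpa [minor] using Fintype.linearIndependent_iff.1 hv _ hrel 0)

lemma exists_det_ne_zero_of_linearIndependent {ι : Type*} [Fintype ι] [DecidableEq ι]
    {v : ι → α → R} (hv : LinearIndependent R v) :
    ∃ b : ι → α, (Matrix.of fun i j => v i (b j)).det ≠ 0 := by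
  let e := Fintype.equivFin ι
  obtain ⟨b, hb⟩ := exists_det_ne_zero_of_linearIndependent_fin (hv.comp e.symm e.symm.injective)
  refine ⟨b ∘ e, ?_⟩
  rw [← Matrix.det_submatrix_equiv_self e] at hb
  simpa [Matrix.submatrix] using hb

end Determinant

section FixedTrace

lemma apply_sum_apply {K S W : Type*} [CommSemiring K] [Semiring S] [Algebra K S] [Group W]
    [Fintype W] (A : W →* (S →ₐ[K] S)) (w : W) (s : S) :
    A w (∑ w', A w' s) = ∑ w', A w' s := by
  simp only [map_sum, ← AlgHom.mul_apply, ← map_mul]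
  exact Fintype.sum_equiv (Equiv.mulLeft w) _ _ fun _ => rfl

variable {K S ι : Type*} [CommRing K] [CommRing S] [IsDomain S] [Algebra K S]
  [Fintype ι] [DecidableEq ι]

lemma exists_det_apply_ne_zero {φ : ι → S →ₐ[K] S} (hφ : Function.Injective φ) :
    ∃ b : ι → S, (Matrix.of fun i j => φ i (b j)).det ≠ 0 := by
  have hcoe : Function.Injective fun i => (φ i : S →* S) := fun i j hij =>
    hφ (AlgHom.ext fun s => DFunLike.congr_fun hij s)
  exact exists_det_ne_zero_of_linearIndependent ((linearIndependent_monoidHom S S).comp _ hcoe)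

variable [Nontrivial K] {φ : ι → S →ₐ[K] S} {b : ι → S} {U V : Submodule K S}
  [Module.Free K U] [Module.Finite K U]

lemma card_mul_finrank_le_of_fixed [Module.Finite K V]
    (hb : (Matrix.of fun i j => φ i (b j)).det ≠ 0)
    (hfix : ∀ u ∈ U, ∀ i, φ i u = u) (hmul : ∀ u ∈ U, ∀ j, u * b j ∈ V) :
    Fintype.card ι * Module.finrank K U ≤ Module.finrank K V := by
  let F : (ι → U) →ₗ[K] V := LinearMap.lsum K (fun _ => U) K fun j =>
    (LinearMap.mulRight K (b j)).restrict fun u hu => by simpa using hmul u hu j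
  have hF (u : ι → U) : (F u : S) = ∑ j, (u j : S) * b j := by
    simp [F]
  have hinj : Function.Injective F := by
    refine (injective_iff_map_eq_zero F).2 fun u hu => ?_
    have hsum : ∑ j, (u j : S) * b j = 0 := by rw [← hF, hu, Submodule.coe_zero]
    have hzero := Matrix.eq_zero_of_mulVec_eq_zero hb (v := fun j => (u j : S)) <| by
      funext i
      calc ∑ j, φ i (b j) * u j = φ i (∑ j, (u j : S) * b j) := by
            simp only [map_sum, map_mul, hfix _ (u _).2, mul_comm]
        _ = 0 := by rw [hsum, map_zero]
    exact funext fun j => Subtype.ext (congrFun hzero j)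
  simpa [Module.finrank_pi_fintype] using LinearMap.finrank_le_finrank_of_injective hinj

lemma finrank_le_card_mul_of_sum_mem (hb : (Matrix.of fun i j => φ i (b j)).det ≠ 0) {i₀ : ι}
    (hi₀ : Function.Injective (φ i₀)) (htrace : ∀ v ∈ V, ∀ j, ∑ i, φ i (v * b j) ∈ U) :
    Module.finrank K V ≤ Fintype.card ι * Module.finrank K U := by
  let G : V →ₗ[K] ι → U := LinearMap.pi fun j =>
    ((∑ i, (φ i).toLinearMap) ∘ₗ LinearMap.mulRight K (b j)).restrict fun v hv => by
      simpa [LinearMap.sum_apply] using htrace v hv j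
  have hG (v : V) (j : ι) : (G v j : S) = ∑ i, φ i v * φ i (b j) := by
    simp [G]
  have hinj : Function.Injective G := by
    refine (injective_iff_map_eq_zero G).2 fun v hv => ?_
    have hzero := Matrix.eq_zero_of_vecMul_eq_zero hb (v := fun i => φ i v) <| by
      funext j
      exact (hG v j).symm.trans (by simp [hv])
    exact Subtype.ext ((map_eq_zero_iff _ hi₀).1 (congrFun hzero i₀))
  simpa [Module.finrank_pi_fintype] using LinearMap.finrank_le_finrank_of_injective hinj

end FixedTrace

section WeightedDegree

section CommSemiring

variable {R σ τ : Type*} [CommSemiring R]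

lemma totalDegree_aeval_le_weightedTotalDegree {g : σ → MvPolynomial τ R} {d : σ → ℕ}
    (hg : ∀ i, (g i).totalDegree ≤ d i) (P : MvPolynomial σ R) :
    (aeval g P).totalDegree ≤ P.weightedTotalDegree d := by
  rw [aeval_def, eval₂_eq]
  refine totalDegree_finsetSum_le fun a ha => ?_
  calc (C (coeff a P) * ∏ i ∈ a.support, g i ^ a i).totalDegree
      ≤ ∑ i ∈ a.support, (g i ^ a i).totalDegree := by
        grw [totalDegree_mul, totalDegree_C, zero_add, totalDegree_finsetProd]
    _ ≤ ∑ i ∈ a.support, a i * d i := Finset.sum_le_sum fun i _ => by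
        grw [totalDegree_pow, hg i]
    _ = Finsupp.weight d a := by simp [Finsupp.weight_apply, Finsupp.sum]
    _ ≤ P.weightedTotalDegree d := le_weightedTotalDegree d ha

lemma totalDegree_apply_le {φ : MvPolynomial σ R →ₐ[R] MvPolynomial τ R}
    (hφ : ∀ i, (φ (X i)).totalDegree ≤ 1) (p : MvPolynomial σ R) :
    (φ p).totalDegree ≤ p.totalDegree := by
  calc (φ p).totalDegree = (aeval (fun i => φ (X i)) p).totalDegree :=
        congrArg totalDegree (DFunLike.congr_fun (aeval_unique φ) p)
    _ ≤ p.weightedTotalDegree 1 := totalDegree_aeval_le_weightedTotalDegree hφ p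
    _ = p.totalDegree := weightedTotalDegree_one p

variable {f : σ → MvPolynomial τ R} {d : σ → ℕ}

lemma isHomogeneous_aeval_monomial (hf : ∀ i, (f i).IsHomogeneous (d i)) (a : σ →₀ ℕ) (r : R) :
    (aeval f (monomial a r)).IsHomogeneous (Finsupp.weight d a) := by
  rw [aeval_monomial, algebraMap_eq, Finsupp.weight_apply]
  refine IsHomogeneous.C_mul (IsHomogeneous.prod _ _ _ fun i _ => ?_) r
  simpa only [smul_eq_mul, mul_comm] using (hf i).pow (a i)

lemma homogeneousComponent_aeval (hf : ∀ i, (f i).IsHomogeneous (d i)) (n : ℕ)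
    (P : MvPolynomial σ R) :
    homogeneousComponent n (aeval f P) = aeval f (weightedHomogeneousComponent d n P) := by
  classical
  induction P using MvPolynomial.induction_on' with
  | add p q hp hq => simp only [map_add, hp, hq]
  | monomial a r =>
    rw [homogeneousComponent_of_mem (isHomogeneous_aeval_monomial hf a r),
      weightedHomogeneousComponent_of_mem (isWeightedHomogeneous_monomial d a r rfl)]
    split_ifs <;> simp

end CommSemiring

variable {K σ τ : Type*} [CommRing K] {f : σ → MvPolynomial τ K} {d : σ → ℕ}

lemma totalDegree_aeval_eq_weightedTotalDegree (hf : ∀ i, (f i).IsHomogeneous (d i))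
    (hind : AlgebraicIndependent K f) (P : MvPolynomial σ K) :
    (aeval f P).totalDegree = P.weightedTotalDegree d := by
  classical
  refine le_antisymm
    (totalDegree_aeval_le_weightedTotalDegree (fun i => (hf i).totalDegree_le) P)
    (Finset.sup_le fun a ha => ?_)
  by_contra! hlt
  have hcomp : aeval f (weightedHomogeneousComponent d (Finsupp.weight d a) P) = 0 := by
    rw [← homogeneousComponent_aeval hf, homogeneousComponent_eq_zero _ _ hlt]
  have hcoeff := congrArg (coeff a) ((map_eq_zero_iff _ hind).1 hcomp)
  rw [coeff_weightedHomogeneousComponent, if_pos rfl, coeff_zero] at hcoeff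
  exact mem_support_iff.1 ha hcoeff

lemma ne_zero_of_isHomogeneous_of_algebraicIndependent [Nontrivial K]
    (hf : ∀ i, (f i).IsHomogeneous (d i)) (hind : AlgebraicIndependent K f) (i : σ) :
    d i ≠ 0 := by
  intro hi
  have hconst : f i = C (coeff 0 (f i)) := totalDegree_eq_zero_iff_eq_C.1 <|
    Nat.eq_zero_of_le_zero ((hf i).totalDegree_le.trans hi.le)
  exact hind.transcendental i (hconst ▸ isAlgebraic_algebraMap _)

end WeightedDegree

section Filtration

section CommSemiring

variable (R : Type*) {σ : Type*} [CommSemiring R]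

/-- The submodule of polynomials all of whose monomials have `d`-weight at most `n`. -/
noncomputable def weightedDegreeLE (d : σ → ℕ) (n : ℕ) : Submodule R (MvPolynomial σ R) :=
  restrictSupport R {a | Finsupp.weight d a ≤ n}

variable {R} {d : σ → ℕ} {n : ℕ}

lemma mem_weightedDegreeLE {p : MvPolynomial σ R} :
    p ∈ weightedDegreeLE R d n ↔ p.weightedTotalDegree d ≤ n :=
  (Finset.sup_le_iff (f := Finsupp.weight d)).symm

lemma mem_weightedDegreeLE_one {p : MvPolynomial σ R} :
    p ∈ weightedDegreeLE R 1 n ↔ p.totalDegree ≤ n := by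
  rw [mem_weightedDegreeLE, weightedTotalDegree_one]

lemma mul_mem_weightedDegreeLE_one {p q : MvPolynomial σ R} {m : ℕ}
    (hp : p ∈ weightedDegreeLE R 1 n) (hq : q.totalDegree ≤ m) :
    p * q ∈ weightedDegreeLE R 1 (n + m) := by
  rw [mem_weightedDegreeLE_one] at hp ⊢
  exact (totalDegree_mul p q).trans (add_le_add hp hq)

variable (d n) in
lemma finrank_weightedDegreeLE [Nontrivial R] :
    Module.finrank R (weightedDegreeLE R d n) = weightCount d n :=
  Module.finrank_eq_nat_card_basis (basisRestrictSupport R _)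

variable (n) in
lemma finite_weightedDegreeLE [Finite σ] (hd : ∀ i, d i ≠ 0) :
    Module.Finite R (weightedDegreeLE R d n) :=
  have := (Finsupp.finite_of_nat_weight_le d hd n).to_subtype
  .of_basis (basisRestrictSupport R _)

end CommSemiring

variable {K σ τ : Type*} [CommRing K] {d : σ → ℕ} {n : ℕ}

/-- The elements of degree at most `n` in the subalgebra generated by `f`. -/
noncomputable def adjoinDegreeLE (f : σ → MvPolynomial τ K) (n : ℕ) :
    Submodule K (MvPolynomial τ K) :=
  Subalgebra.toSubmodule (Algebra.adjoin K (Set.range f)) ⊓ weightedDegreeLE K 1 n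

variable {f : σ → MvPolynomial τ K}

variable (n) in
lemma map_aeval_weightedDegreeLE (hf : ∀ i, (f i).IsHomogeneous (d i))
    (hind : AlgebraicIndependent K f) :
    (weightedDegreeLE K d n).map (aeval f).toLinearMap = adjoinDegreeLE f n := by
  ext p
  simp only [adjoinDegreeLE, Submodule.mem_map, Submodule.mem_inf, Subalgebra.mem_toSubmodule,
    Algebra.adjoin_range_eq_range_aeval, AlgHom.mem_range, mem_weightedDegreeLE,
    weightedTotalDegree_one, ← totalDegree_aeval_eq_weightedTotalDegree hf hind,
    AlgHom.toLinearMap_apply]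
  constructor
  · rintro ⟨P, hP, rfl⟩
    exact ⟨⟨P, rfl⟩, hP⟩
  · rintro ⟨⟨P, rfl⟩, hP⟩
    exact ⟨P, hP, rfl⟩

/-- Substituting `f` for the variables identifies the weight filtration of the polynomial ring with
the degree filtration of the subalgebra generated by `f`. -/
noncomputable def weightedDegreeLEEquivAdjoin (hf : ∀ i, (f i).IsHomogeneous (d i))
    (hind : AlgebraicIndependent K f) (n : ℕ) :
    weightedDegreeLE K d n ≃ₗ[K] adjoinDegreeLE f n :=
  (Submodule.equivMapOfInjective (aeval f).toLinearMap hind _).trans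
    (LinearEquiv.ofEq _ _ (map_aeval_weightedDegreeLE n hf hind))

lemma finrank_adjoinDegreeLE [Nontrivial K] (hf : ∀ i, (f i).IsHomogeneous (d i))
    (hind : AlgebraicIndependent K f) (n : ℕ) :
    Module.finrank K (adjoinDegreeLE f n) = weightCount d n := by
  rw [← (weightedDegreeLEEquivAdjoin hf hind n).finrank_eq, finrank_weightedDegreeLE]

lemma free_adjoinDegreeLE (hf : ∀ i, (f i).IsHomogeneous (d i))
    (hind : AlgebraicIndependent K f) (n : ℕ) :
    Module.Free K (adjoinDegreeLE f n) :=
  .of_basis ((basisRestrictSupport K _).map (weightedDegreeLEEquivAdjoin hf hind n))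

lemma finite_adjoinDegreeLE [Finite σ] [Nontrivial K] (hf : ∀ i, (f i).IsHomogeneous (d i))
    (hind : AlgebraicIndependent K f) (n : ℕ) :
    Module.Finite K (adjoinDegreeLE f n) :=
  have hd := ne_zero_of_isHomogeneous_of_algebraicIndependent hf hind
  have := finite_weightedDegreeLE (R := K) n hd
  .equiv (weightedDegreeLEEquivAdjoin hf hind n)

end Filtration

section DegreeProduct

variable {K σ : Type*} [CommRing K] [IsDomain K] [Fintype σ]
  {f : σ → MvPolynomial σ K} {d : σ → ℕ}

lemma card_le_prod_degree {ι : Type*} [Fintype ι]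
    {φ : ι → MvPolynomial σ K →ₐ[K] MvPolynomial σ K} (hφ : Function.Injective φ)
    (hf : ∀ i, (f i).IsHomogeneous (d i)) (hind : AlgebraicIndependent K f)
    (hfix : ∀ p ∈ Algebra.adjoin K (Set.range f), ∀ j, φ j p = p) :
    Fintype.card ι ≤ ∏ i, d i := by
  classical
  have hd := ne_zero_of_isHomogeneous_of_algebraicIndependent hf hind
  obtain ⟨b, hb⟩ := exists_det_apply_ne_zero hφ
  obtain ⟨c, hc⟩ := Finite.exists_le fun j => (b j).totalDegree
  refine le_of_mul_le_mul_add (c := c) (weightCount_pos hd 0) (weightCount_le_pow hd) fun n => ?_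
  have := free_adjoinDegreeLE hf hind n
  have := finite_adjoinDegreeLE hf hind n
  have := finite_weightedDegreeLE (R := K) (d := (1 : σ → ℕ)) (n + c) fun _ => one_ne_zero
  calc Fintype.card ι * weightCount d n
      = Fintype.card ι * Module.finrank K (adjoinDegreeLE f n) := by
        rw [finrank_adjoinDegreeLE hf hind n]
    _ ≤ Module.finrank K (weightedDegreeLE K (1 : σ → ℕ) (n + c)) :=
        card_mul_finrank_le_of_fixed hb (fun u hu => hfix u hu.1)
          fun u hu j => mul_mem_weightedDegreeLE_one hu.2 (hc j)
    _ = weightCount 1 (n + c) := finrank_weightedDegreeLE _ _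
    _ ≤ (∏ i, d i) * weightCount d (n + c) := weightCount_one_le_prod_mul hd _

lemma prod_degree_le_card {W : Type*} [Group W] [Fintype W]
    {A : W →* (MvPolynomial σ K →ₐ[K] MvPolynomial σ K)} (hA : Function.Injective A)
    (hdeg : ∀ w i, (A w (X i)).totalDegree ≤ 1)
    (hf : ∀ i, (f i).IsHomogeneous (d i)) (hind : AlgebraicIndependent K f)
    (hgen : ∀ p, (∀ w, A w p = p) → p ∈ Algebra.adjoin K (Set.range f)) :
    ∏ i, d i ≤ Fintype.card W := by
  classical
  have hd := ne_zero_of_isHomogeneous_of_algebraicIndependent hf hind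
  obtain ⟨b, hb⟩ := exists_det_apply_ne_zero hA
  obtain ⟨c, hc⟩ := Finite.exists_le fun j => (b j).totalDegree
  refine le_of_mul_le_mul_add (c := ∑ i, d i + c) (weightCount_pos hd 0)
    (weightCount_le_pow hd) fun n => ?_
  rw [← add_assoc]
  set m := n + ∑ i, d i
  have := free_adjoinDegreeLE hf hind (m + c)
  have := finite_adjoinDegreeLE hf hind (m + c)
  have htrace : ∀ v ∈ weightedDegreeLE K (1 : σ → ℕ) m, ∀ j,
      ∑ w, A w (v * b j) ∈ adjoinDegreeLE f (m + c) := fun v hv j =>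
    ⟨hgen _ (apply_sum_apply A · _), sum_mem fun w _ => mem_weightedDegreeLE_one.2 <|
      (totalDegree_apply_le (hdeg w) _).trans <|
        mem_weightedDegreeLE_one.1 (mul_mem_weightedDegreeLE_one hv (hc j))⟩
  have hone : Function.Injective (A 1) := by
    rw [map_one]
    exact Function.injective_id
  calc (∏ i, d i) * weightCount d n ≤ weightCount 1 m := prod_mul_weightCount_le hd n
    _ = Module.finrank K (weightedDegreeLE K (1 : σ → ℕ) m) := (finrank_weightedDegreeLE _ _).symm
    _ ≤ Fintype.card W * Module.finrank K (adjoinDegreeLE f (m + c)) :=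
        finrank_le_card_mul_of_sum_mem hb hone htrace
    _ = Fintype.card W * weightCount d (m + c) := by rw [finrank_adjoinDegreeLE hf hind]

theorem stmt13_general {W : Type*} [Group W]
    (A : W →* (MvPolynomial σ K →ₐ[K] MvPolynomial σ K)) (hA : Function.Injective A)
    (hdeg : ∀ w i, (A w (X i)).totalDegree ≤ 1)
    (hf : ∀ i, (f i).IsHomogeneous (d i)) (hind : AlgebraicIndependent K f)
    (hgen : (Algebra.adjoin K (Set.range f) : Set (MvPolynomial σ K)) = {p | ∀ w, A w p = p}) :
    Finite W ∧ ∏ i, d i = Nat.card W := by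
  have hmem (p : MvPolynomial σ K) : p ∈ Algebra.adjoin K (Set.range f) ↔ ∀ w, A w p = p :=
    Set.ext_iff.1 hgen p
  have hcard (s : Finset W) : s.card ≤ ∏ i, d i := by
    simpa using card_le_prod_degree (hA.comp Subtype.val_injective) hf hind
      fun p hp (w : s) => (hmem p).1 hp w
  have hfin : Finite W := by
    by_contra! hinf
    obtain ⟨s, hs⟩ := Infinite.exists_subset_card_eq W (∏ i, d i + 1)
    exact (hcard s).not_gt (by omega)
  have := Fintype.ofFinite W
  rw [Nat.card_eq_fintype_card]
  exact ⟨hfin, (prod_degree_le_card hA hdeg hf hind fun p => (hmem p).2).antisymm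
    (hcard Finset.univ)⟩

end DegreeProduct

section LinearAction

variable {K : Type} [Field K] {k : ℕ}

lemma polyAct_X (g : (Fin k → K) ≃ₗ[K] (Fin k → K)) (i : Fin k) :
    polyAct K k g (X i) = ∑ j, C (g (Pi.single i 1) j) * X j := by
  simp [polyAct]

lemma polyAct_sum_C_mul_X (g : (Fin k → K) ≃ₗ[K] (Fin k → K)) (v : Fin k → K) :
    polyAct K k g (∑ i, C (v i) * X i) = ∑ j, C (g v j) * X j := by
  have hv (j : Fin k) : g v j = ∑ i, v i * g (Pi.single i 1) j := by
    conv_lhs => rw [← (Pi.basisFun K (Fin k)).sum_repr v]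
    simp
  simp only [map_sum, map_mul, polyAct_X, algHom_C, algebraMap_eq, hv, Finset.mul_sum,
    Finset.sum_mul, mul_assoc]
  exact Finset.sum_comm

lemma totalDegree_polyAct_X_le (g : (Fin k → K) ≃ₗ[K] (Fin k → K)) (i : Fin k) :
    (polyAct K k g (X i)).totalDegree ≤ 1 := by
  rw [polyAct_X]
  exact totalDegree_finsetSum_le fun j _ => (isHomogeneous_C_mul_X _ j).totalDegree_le

lemma polyAct_one : polyAct K k 1 = 1 := by
  refine algHom_ext fun i => ?_
  simp [polyAct_X, Pi.single_apply]

lemma polyAct_mul (g h : (Fin k → K) ≃ₗ[K] (Fin k → K)) :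
    polyAct K k (g * h) = polyAct K k g * polyAct K k h := by
  refine algHom_ext fun i => ?_
  rw [AlgHom.mul_apply, polyAct_X, polyAct_X, polyAct_sum_C_mul_X, LinearEquiv.mul_apply]

lemma polyAct_injective : Function.Injective (polyAct K k) := by
  intro g h hgh
  refine LinearEquiv.toLinearMap_injective ((Pi.basisFun K (Fin k)).ext fun i => funext fun j => ?_)
  have := congrArg (coeff (Finsupp.single j 1)) (DFunLike.congr_fun hgh (X i))
  simpa [polyAct_X, coeff_sum, coeff_C_mul, coeff_X, Finsupp.single_left_inj] using this

/-- `polyAct` as a representation of `GL(V)` on the polynomial algebra `K[V]`. -/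
noncomputable def polyActHom (K : Type) [Field K] (k : ℕ) :
    ((Fin k → K) ≃ₗ[K] (Fin k → K)) →* (MvPolynomial (Fin k) K →ₐ[K] MvPolynomial (Fin k) K) where
  toFun := polyAct K k
  map_one' := polyAct_one
  map_mul' := polyAct_mul

end LinearAction

/-- Degree product formula: if a finite group `W` acts linearly and faithfully
on `V = K^k` and the invariant ring `K[V]^W` is a polynomial algebra on
homogeneous generators `f_1, …, f_k`, then `∏ deg f_i = |W|`. -/
theorem stmt13 {K : Type} [Field K] {W : Type} [Group W] [Finite W] (k : ℕ)
    (ρ : W →* ((Fin k → K) ≃ₗ[K] (Fin k → K)))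
    (hfaithful : Function.Injective ρ)
    (f : Fin k → MvPolynomial (Fin k) K) (d : Fin k → ℕ)
    (hhom : ∀ i, (f i).IsHomogeneous (d i))
    (hind : AlgebraicIndependent K f)
    (hgen : (Algebra.adjoin K (Set.range f) : Set (MvPolynomial (Fin k) K)) =
      {p | ∀ w : W, polyAct K k (ρ w) p = p}) :
    ∏ i, d i = Nat.card W := by
  exact (stmt13_general ((polyActHom K k).comp ρ) (polyAct_injective.comp hfaithful)
    (fun w => totalDegree_polyAct_X_le (ρ w)) hhom hind hgen).2
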